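/- Let φ_cur be a Kh-free (propositional) formula, let φ⁺_cur be a conjunction of positive atoms and φ⁻_cur a conjunction of negative atoms. Then φ_cur ∧ φ⁺_cur ∧ φ⁻_cur is satisfiable if and only if φ⁺_cur ∧ (φ⁻_cur ∧ ¬Kh(φ_cur, ⊥)) is satisfiable. (The propositional residue can be absorbed into a negative atom, since ¬Kh(φ_cur,⊥) is equivalent to E φ_cur.) -/

import Mathlib

/-! `¬Kh(φ,⊥)` says exactly that `φ` holds at some state: if `⟦φ⟧ = ∅`, the empty plan is a
vacuous witness for `Kh(φ,⊥)`; and if `s ∈ ⟦φ⟧`, then a plan strongly executable at `s` reaches some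
state (`exists_runPlan_of_SE`), so it cannot achieve `⊥`. As the truth of `Kh` formulas does not
depend on the state, a model of either side becomes a model of the other by changing the
distinguished state only. -/

/-- Formulas of the logic L(Kh): p | ¬φ | φ∨ψ | Kh(φ,ψ). -/
inductive KhForm (P : Type) : Type
  | prop : P → KhForm P
  | neg : KhForm P → KhForm P
  | or : KhForm P → KhForm P → KhForm P
  | kh : KhForm P → KhForm P → KhForm P
  deriving DecidableEq

namespace KhForm

/-- Conjunction, as the usual abbreviation. -/
def and {P : Type} (φ ψ : KhForm P) : KhForm P := .neg (.or (.neg φ) (.neg ψ))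

/-- ⊥ abbreviates p ∧ ¬p for a fixed propositional symbol p. -/
def bot {P : Type} (p : P) : KhForm P := and (.prop p) (.neg (.prop p))

/-- ⊤ abbreviates ¬⊥. -/
def top {P : Type} (p : P) : KhForm P := .neg (bot p)

/-- Number of symbols of a formula. -/
def size {P : Type} : KhForm P → ℕ
  | .prop _ => 1
  | .neg φ => size φ + 1
  | .or φ ψ => size φ + size ψ + 1
  | .kh φ ψ => size φ + size ψ + 1

end KhForm

/-- A formula is Kh-free if it contains no occurrence of Kh. -/
def KhFree {P : Type} : KhForm P → Prop
  | .prop _ => True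
  | .neg φ => KhFree φ
  | .or φ ψ => KhFree φ ∧ KhFree ψ
  | .kh _ _ => False

/-- A labelled transition system over propositional symbols `P`, action symbols `A`
and states `S`: a family of binary relations on `S` and a valuation. -/
structure LTS (P A S : Type) where
  R : A → S → S → Prop
  V : P → Set S

/-- The relation `R_π` associated to a plan (finite word over `A`):
`R_ε` is the identity and `R_{πa} = R_π ; R_a`. -/
def runPlan {P A S : Type} (M : LTS P A S) : List A → S → S → Prop
  | [] => fun s t => s = t
  | a :: π => fun s t => ∃ u, M.R a s u ∧ runPlan M π u t

/-- `R_π(X)`, the image of a set of states under a plan. -/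
def planImage {P A S : Type} (M : LTS P A S) (π : List A) (X : Set S) : Set S :=
  { t | ∃ s ∈ X, runPlan M π s t }

/-- Strong executability of a plan at a state: at every step of the plan, the
next action is guaranteed to be performable. -/
def SE {P A S : Type} (M : LTS P A S) : List A → S → Prop
  | [] => fun _ => True
  | a :: π => fun s => (∃ u, M.R a s u) ∧ ∀ u, M.R a s u → SE M π u

/-- Truth sets: `⟦Kh(φ,ψ)⟧ = S` if there is a plan π with `⟦φ⟧ ⊆ SE(π)` and
`R_π(⟦φ⟧) ⊆ ⟦ψ⟧`, and `∅` otherwise. -/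
def truth {P A S : Type} (M : LTS P A S) : KhForm P → Set S
  | .prop p => M.V p
  | .neg φ => (truth M φ)ᶜ
  | .or φ ψ => truth M φ ∪ truth M ψ
  | .kh φ ψ => { _s | ∃ π : List A,
      (∀ s ∈ truth M φ, SE M π s) ∧ planImage M π (truth M φ) ⊆ truth M ψ }

/-- π is a witness for Kh(φ,ψ) in M. -/
def IsWitness {P A S : Type} (M : LTS P A S) (π : List A) (φ ψ : KhForm P) : Prop :=
  (∀ s ∈ truth M φ, SE M π s) ∧ planImage M π (truth M φ) ⊆ truth M ψ

/-- The universal modality `Aφ`, as the abbreviation `Kh(¬φ,⊥)`. -/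
def Aform {P : Type} (p : P) (φ : KhForm P) : KhForm P := .kh (.neg φ) (KhForm.bot p)

/-- The existential modality `Eφ = ¬A¬φ`. -/
def Eform {P : Type} (p : P) (φ : KhForm P) : KhForm P := .neg (Aform p (.neg φ))

/-- Subjective formulas: Boolean combinations (¬, ∨) of positive atoms
Kh(ψ,χ) with ψ, χ Kh-free. -/
inductive Subjective {P : Type} : KhForm P → Prop
  | atom {ψ χ : KhForm P} : KhFree ψ → KhFree χ → Subjective (.kh ψ χ)
  | neg {φ : KhForm P} : Subjective φ → Subjective (.neg φ)
  | or {φ ψ : KhForm P} : Subjective φ → Subjective ψ → Subjective (.or φ ψ)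

/-- Formulas of the logic L(A): p | ¬α | α∨β | Aα. -/
inductive AForm (P : Type) : Type
  | prop : P → AForm P
  | neg : AForm P → AForm P
  | or : AForm P → AForm P → AForm P
  | all : AForm P → AForm P

/-- Truth sets for L(A) formulas over an LTS. -/
def atruth {P A S : Type} (M : LTS P A S) : AForm P → Set S
  | .prop p => M.V p
  | .neg α => (atruth M α)ᶜ
  | .or α β => atruth M α ∪ atruth M β
  | .all α => { _s | atruth M α = Set.univ }

/-- `CBar I D s t`: the pair (s,t) is in the reflexive-transitive closure (on I)
of `D̄ = (I×I) ∖ D`. -/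
def CBar {ι : Type} (I : Finset ι) (D : Finset (ι × ι)) (s t : ι) : Prop :=
  s ∈ I ∧ t ∈ I ∧ Relation.ReflTransGen (fun u v => u ∈ I ∧ v ∈ I ∧ (u, v) ∉ D) s t

/-- `ρ` occurs (as a subformula) in a formula. -/
inductive IsSubformula {P : Type} (ρ : KhForm P) : KhForm P → Prop
  | refl : IsSubformula ρ ρ
  | neg {φ : KhForm P} : IsSubformula ρ φ → IsSubformula ρ (.neg φ)
  | orL {φ ψ : KhForm P} : IsSubformula ρ φ → IsSubformula ρ (.or φ ψ)
  | orR {φ ψ : KhForm P} : IsSubformula ρ ψ → IsSubformula ρ (.or φ ψ)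
  | khL {φ ψ : KhForm P} : IsSubformula ρ φ → IsSubformula ρ (.kh φ ψ)
  | khR {φ ψ : KhForm P} : IsSubformula ρ ψ → IsSubformula ρ (.kh φ ψ)

/-- Replace all occurrences of the atom Kh(ψ,χ) by ρ. -/
def substKh {P : Type} [DecidableEq P] (ψ χ ρ : KhForm P) : KhForm P → KhForm P
  | .prop q => .prop q
  | .neg φ => .neg (substKh ψ χ ρ φ)
  | .or φ₁ φ₂ => .or (substKh ψ χ ρ φ₁) (substKh ψ χ ρ φ₂)
  | .kh φ₁ φ₂ =>
      if φ₁ = ψ ∧ φ₂ = χ then ρ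
      else .kh (substKh ψ χ ρ φ₁) (substKh ψ χ ρ φ₂)

theorem truth_bot {P A S : Type} (M : LTS P A S) (p : P) :
    truth M (KhForm.bot p) = ∅ := by
  ext s
  simp [KhForm.bot, KhForm.and, truth]

/-- A strongly executable plan has at least one complete run. -/
theorem exists_runPlan_of_SE {P A S : Type} (M : LTS P A S) (π : List A) :
    ∀ s, SE M π s → ∃ t, runPlan M π s t := by
  induction π with
  | nil => exact fun s _ => ⟨s, rfl⟩
  | cons a π ih =>
    rintro s ⟨⟨u, hu⟩, h⟩
    obtain ⟨t, ht⟩ := ih u (h u hu)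
    exact ⟨t, u, hu, ht⟩

/-- `¬Kh(φ,⊥)` is the existential modality `Eφ`. -/
theorem mem_truth_neg_kh_bot {P A S : Type} (M : LTS P A S) (p : P) (φ : KhForm P) (s : S) :
    s ∈ truth M (KhForm.neg (.kh φ (KhForm.bot p))) ↔ ∃ t, t ∈ truth M φ := by
  constructor
  · intro h
    by_contra hne
    push Not at hne
    exact h ⟨[], fun t ht => (hne t ht).elim, fun _ ⟨t, ht, _⟩ => (hne t ht).elim⟩
  · rintro ⟨t, ht⟩ ⟨π, hSE, hsub⟩
    obtain ⟨u, hu⟩ := exists_runPlan_of_SE M π t (hSE t ht)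
    have hmem := hsub ⟨t, ht, hu⟩
    rw [truth_bot] at hmem
    exact hmem

/-- for a Kh-free φ_cur, φ_cur ∧ φ⁺_cur ∧ φ⁻_cur is satisfiable iff
φ⁺_cur ∧ (φ⁻_cur ∧ ¬Kh(φ_cur,⊥)) is satisfiable. -/
theorem absorb_propositional_residue
    (P A : Type) [Countable P] [Countable A] [Infinite A]
    (p : P) (φcur : KhForm P) (hcur : KhFree φcur)
    (pos neg : List (KhForm P × KhForm P))
    (hpos : ∀ pr ∈ pos, KhFree pr.1 ∧ KhFree pr.2)
    (hneg : ∀ pr ∈ neg, KhFree pr.1 ∧ KhFree pr.2) :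
    (∃ (S : Type) (_ : Nonempty S) (M : LTS P A S) (s : S),
        s ∈ truth M φcur ∧
        (∀ pr ∈ pos, s ∈ truth M (KhForm.kh pr.1 pr.2)) ∧
        (∀ pr ∈ neg, s ∈ truth M (KhForm.neg (.kh pr.1 pr.2)))) ↔
    (∃ (S : Type) (_ : Nonempty S) (M : LTS P A S) (s : S),
        (∀ pr ∈ pos, s ∈ truth M (KhForm.kh pr.1 pr.2)) ∧
        ((∀ pr ∈ neg, s ∈ truth M (KhForm.neg (.kh pr.1 pr.2))) ∧
          s ∈ truth M (KhForm.neg (.kh φcur (KhForm.bot p))))) := by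
  constructor
  · rintro ⟨S, hS, M, s, hs, hp, hn⟩
    exact ⟨S, hS, M, s, hp, hn, (mem_truth_neg_kh_bot M p φcur s).2 ⟨s, hs⟩⟩
  · rintro ⟨S, hS, M, s, hp, hn, hE⟩
    obtain ⟨t, ht⟩ := (mem_truth_neg_kh_bot M p φcur s).1 hE
    -- The truth set of a `Kh` formula is constant in the state, so `hp` and `hn` also hold at `t`.
    exact ⟨S, hS, M, t, ht, hp, hn⟩
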